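/- Let K be a nonnegative random variable with K > 0 almost surely, E|log K| < ∞, E[log K] < 0, and E[K^{s_0}] < ∞ for some s_0 > 0. Then there exists s ∈ (0, s_0] such that E[K^s] < 1. -/

import Mathlib

open MeasureTheory

/-!
With `X = log K`, the moment `E[K ^ s]` is the moment generating function of `X` at `s`; it equals
`1` at `s = 0`. By convexity of `s ↦ exp (s * X)`, its difference quotients at `0` over `(0, s₀]`
lie between the integrable functions `X` and `(K ^ s₀ - 1) / s₀`, so dominated convergence gives
the right derivative `E[X] < 0` of the moment at `0`, even though `0` may be a boundary point of
the domain of finiteness.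
-/

open ProbabilityTheory Set Filter Topology

lemma abs_slope_le_max_of_convexOn {f : ℝ → ℝ} {f' a b s : ℝ} (hf : ConvexOn ℝ (Icc a b) f)
    (hf' : HasDerivWithinAt f f' (Ioi a) a) (hs : s ∈ Ioc a b) :
    |slope f a s| ≤ max |f'| |slope f a b| := by
  have hab : a < b := hs.1.trans_le hs.2
  have ha : a ∈ Icc a b := left_mem_Icc.2 hab.le
  have hb : b ∈ Icc a b := right_mem_Icc.2 hab.le
  have hs' : s ∈ Icc a b := Ioc_subset_Icc_self hs
  exact abs_le_max_abs_abs (hf.le_slope_of_hasDerivWithinAt_Ioi ha hs' hs.1 hf')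
    (hf.slope_mono ha ⟨hs', hs.1.ne'⟩ ⟨hb, hab.ne'⟩ hs.2)

lemma exists_mem_Ioc_lt_of_hasDerivWithinAt_neg {f : ℝ → ℝ} {f' a b : ℝ} (hab : a < b)
    (hf : HasDerivWithinAt f f' (Ioi a) a) (hf' : f' < 0) : ∃ s ∈ Ioc a b, f s < f a := by
  obtain ⟨s, hslope, hs⟩ :=
    ((hf.limsup_slope_le' self_notMem_Ioi hf').and (Ioc_mem_nhdsGT hab)).exists
  exact ⟨s, hs, (slope_neg_iff_of_le hs.1.le).1 hslope⟩

section

variable {Ω : Type*} [MeasurableSpace Ω] {μ : Measure Ω}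

lemma integrable_slope {E : Type*} [NormedAddCommGroup E] [NormedSpace ℝ E] {F : ℝ → Ω → E}
    {a s : ℝ} (ha : Integrable (F a) μ) (hs : Integrable (F s) μ) :
    Integrable (fun ω => slope (F · ω) a s) μ := by
  simp only [slope_def_module]
  exact (hs.sub ha).smul (s - a)⁻¹

lemma integral_slope {E : Type*} [NormedAddCommGroup E] [NormedSpace ℝ E] {F : ℝ → Ω → E}
    {a s : ℝ} (ha : Integrable (F a) μ) (hs : Integrable (F s) μ) :
    ∫ ω, slope (F · ω) a s ∂μ = slope (fun t => ∫ ω, F t ω ∂μ) a s := by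
  simp only [slope_def_module, integral_smul, integral_sub hs ha]

lemma hasDerivWithinAt_integral_of_convexOn {F : ℝ → Ω → ℝ} {F' : Ω → ℝ} {a b : ℝ} (hab : a < b)
    (hF_int : ∀ s ∈ Icc a b, Integrable (F s) μ) (hF'_int : Integrable F' μ)
    (hF_convex : ∀ᵐ ω ∂μ, ConvexOn ℝ (Icc a b) (F · ω))
    (hF_deriv : ∀ᵐ ω ∂μ, HasDerivWithinAt (F · ω) (F' ω) (Ioi a) a) :
    HasDerivWithinAt (fun s => ∫ ω, F s ω ∂μ) (∫ ω, F' ω ∂μ) (Ioi a) a := by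
  have ha : Integrable (F a) μ := hF_int a (left_mem_Icc.2 hab.le)
  have hb : Integrable (F b) μ := hF_int b (right_mem_Icc.2 hab.le)
  have hnear : ∀ᶠ s in 𝓝[>] a, s ∈ Ioc a b := Ioc_mem_nhdsGT hab
  have hF_int_near : ∀ᶠ s in 𝓝[>] a, Integrable (F s) μ :=
    hnear.mono fun s hs => hF_int s (Ioc_subset_Icc_self hs)
  have hlim : Tendsto (fun s => ∫ ω, slope (F · ω) a s ∂μ) (𝓝[>] a) (𝓝 (∫ ω, F' ω ∂μ)) := by
    refine tendsto_integral_filter_of_dominated_convergence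
      (fun ω => max |F' ω| |slope (F · ω) a b|) ?_ ?_
      (hF'_int.abs.sup (integrable_slope ha hb).abs) ?_
    · exact hF_int_near.mono fun s hs => (integrable_slope ha hs).aestronglyMeasurable
    · filter_upwards [hnear] with s hs
      filter_upwards [hF_convex, hF_deriv] with ω hconvex hderiv
      exact abs_slope_le_max_of_convexOn hconvex hderiv hs
    · exact hF_deriv.mono fun ω h => (hasDerivWithinAt_iff_tendsto_slope' self_notMem_Ioi).1 h
  rw [hasDerivWithinAt_iff_tendsto_slope' self_notMem_Ioi]
  exact hlim.congr' (hF_int_near.mono fun s hs => integral_slope ha hs)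

lemma hasDerivWithinAt_mgf_zero_right [IsFiniteMeasure μ] {X : Ω → ℝ} {t : ℝ} (ht : 0 < t)
    (hX : Integrable X μ) (hexp : Integrable (fun ω => Real.exp (t * X ω)) μ) :
    HasDerivWithinAt (mgf X μ) (∫ ω, X ω ∂μ) (Ioi 0) 0 := by
  refine hasDerivWithinAt_integral_of_convexOn ht
    (fun s hs => integrable_exp_mul_of_nonneg_of_le hexp hs.1 hs.2) hX ?_ ?_
  · refine .of_forall fun ω => ?_
    exact (convexOn_exp.comp_linearMap (LinearMap.mulRight ℝ (X ω))).subset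
      (subset_univ _) (convex_Icc 0 t)
  · refine .of_forall fun ω => ?_
    simpa using ((hasDerivAt_id (0 : ℝ)).mul_const (X ω)).exp.hasDerivWithinAt

lemma exists_mgf_lt_measureReal_univ_of_integral_neg [IsFiniteMeasure μ] {X : Ω → ℝ}
    {t : ℝ} (ht : 0 < t) (hX : Integrable X μ)
    (hexp : Integrable (fun ω => Real.exp (t * X ω)) μ)
    (hneg : ∫ ω, X ω ∂μ < 0) : ∃ s ∈ Ioc 0 t, mgf X μ s < μ.real univ := by
  simpa only [mgf_zero'] using
    exists_mem_Ioc_lt_of_hasDerivWithinAt_neg ht (hasDerivWithinAt_mgf_zero_right ht hX hexp) hneg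

lemma rpow_ae_eq_exp_mul_log {K : Ω → ℝ} (hK : ∀ᵐ ω ∂μ, 0 < K ω) (s : ℝ) :
    (fun ω => K ω ^ s) =ᵐ[μ] fun ω => Real.exp (s * Real.log (K ω)) := by
  filter_upwards [hK] with ω hω
  rw [Real.rpow_def_of_pos hω, mul_comm]

end

/-- Let `K ≥ 0` be a random variable with `K > 0` a.s.,
`E|log K| < ∞`, `E[log K] < 0`, and `E[K^s₀] < ∞` for some `s₀ > 0`. Then there exists
`s ∈ (0, s₀]` with `E[K^s] < 1`. -/
theorem stmt_5 {Ω : Type*} [MeasurableSpace Ω] (P : Measure Ω) [IsProbabilityMeasure P]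
    (K : Ω → ℝ) (hKm : Measurable K) (hK0 : ∀ ω, 0 ≤ K ω)
    (hKpos : ∀ᵐ ω ∂P, 0 < K ω)
    (hlogint : Integrable (fun ω => Real.log (K ω)) P)
    (hlogneg : ∫ ω, Real.log (K ω) ∂P < 0)
    (s₀ : ℝ) (hs₀ : 0 < s₀)
    (hmom : Integrable (fun ω => K ω ^ s₀) P) :
    ∃ s ∈ Set.Ioc (0 : ℝ) s₀, ∫ ω, K ω ^ s ∂P < 1 := by
  obtain ⟨s, hs, hmgf⟩ := exists_mgf_lt_measureReal_univ_of_integral_neg hs₀ hlogint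
    (hmom.congr (rpow_ae_eq_exp_mul_log hKpos s₀)) hlogneg
  refine ⟨s, hs, ?_⟩
  calc ∫ ω, K ω ^ s ∂P = mgf (fun ω => Real.log (K ω)) P s :=
        integral_congr_ae (rpow_ae_eq_exp_mul_log hKpos s)
    _ < P.real univ := hmgf
    _ = 1 := probReal_univ
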